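/- Let 1 ≤ q ≤ n−1 and let A be a complex n×q matrix that is totally non-singular. Then there exists a totally non-singular complex n×(n−q) matrix B such that A*B = 0, where A* denotes the conjugate transpose. -/

import Mathlib

open Matrix

noncomputable section

/-- A matrix is totally non-singular if every minor (the determinant of every square
submatrix) is nonzero. -/
def TotallyNonSingular {K : Type*} [CommRing K] {a b : ℕ} (A : Matrix (Fin a) (Fin b) K) :
    Prop :=
  ∀ (s : ℕ) (f : Fin s → Fin a) (g : Fin s → Fin b),
    StrictMono f → StrictMono g → (A.submatrix f g).det ≠ 0

theorem exists_witness {n q m s : ℕ} (hnm : m + q ≤ n)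
    (A : Matrix (Fin n) (Fin q) ℂ) (hA : TotallyNonSingular A)
    (f : Fin s → Fin n) (g : Fin s → Fin m) (hf : StrictMono f) (hg : StrictMono g) :
    ∃ C : Matrix (Fin n) (Fin m) ℂ, Aᴴ * C = 0 ∧ C.submatrix f g = 1 := by
  have hs : s ≤ m := by simpa using Fintype.card_le_of_injective g hg.injective
  have hcard : q ≤ (Finset.univ \ Finset.univ.image f).card := by
    rw [Finset.card_sdiff_of_subset (Finset.subset_univ _),
      Finset.card_image_of_injective _ hf.injective]
    simp
    omega
  obtain ⟨T, hT, hTc⟩ := Finset.exists_subset_card_eq hcard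
  let t := T.orderEmbOfFin hTc
  have htf : ∀ i j, f i ≠ t j := by
    intro i j h
    have := hT (T.orderEmbOfFin_mem hTc j)
    simp only [Finset.mem_sdiff, Finset.mem_image, Finset.mem_univ, true_and] at this
    exact this ⟨i, h⟩
  let M : Matrix (Fin q) (Fin q) ℂ := (A.submatrix t id)ᴴ
  have hM : IsUnit M.det := by
    rw [isUnit_iff_ne_zero, Matrix.det_conjTranspose]
    exact star_ne_zero.mpr (hA q t id t.strictMono strictMono_id)
  let P : Matrix (Fin n) (Fin q) ℂ := (1 : Matrix (Fin n) (Fin n) ℂ).submatrix id t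
  have hP : Aᴴ * P = M := by
    ext i j
    simp [P, M, Matrix.mul_apply, Matrix.one_apply]
  let E : Matrix (Fin n) (Fin m) ℂ :=
    (1 : Matrix (Fin n) (Fin n) ℂ).submatrix id f * (1 : Matrix (Fin m) (Fin m) ℂ).submatrix g id
  refine ⟨E + P * (M⁻¹ * (-(Aᴴ * E))), ?_, ?_⟩
  · rw [Matrix.mul_add, ← Matrix.mul_assoc Aᴴ P, hP, ← Matrix.mul_assoc M, Matrix.mul_nonsing_inv _ hM]
    simp
  · ext i j
    have h1 : ∀ k, P (f i) k = 0 := fun k => by simp [P, htf]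
    rw [Matrix.submatrix_apply, Matrix.add_apply, Matrix.mul_apply (M := P)]
    simp [h1, E, Matrix.mul_apply, Matrix.one_apply, hf.injective.eq_iff, hg.injective.eq_iff]

/-- for `1 ≤ q ≤ n−1` and a totally non-singular complex `n×q` matrix `A`,
there is a totally non-singular complex `n×(n−q)` matrix `B` with `A*B = 0`. -/
theorem stmt7 {n q : ℕ} (hq1 : 1 ≤ q) (hqn : q ≤ n - 1)
    (A : Matrix (Fin n) (Fin q) ℂ) (hA : TotallyNonSingular A) :
    ∃ B : Matrix (Fin n) (Fin (n - q)) ℂ, TotallyNonSingular B ∧ Aᴴ * B = 0 := by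
  classical
  let T := Σ s : Fin (n + 1), {f : Fin s → Fin n // StrictMono f} ×
    {g : Fin s → Fin (n - q) // StrictMono g}
  have hw : ∀ t : T, ∃ C : Matrix (Fin n) (Fin (n - q)) ℂ,
      Aᴴ * C = 0 ∧ C.submatrix t.2.1.1 t.2.2.1 = 1 := fun t =>
    exists_witness (by omega) A hA _ _ t.2.1.2 t.2.2.2
  choose C hC0 hC1 using hw
  let X : Matrix (Fin n) (Fin (n - q)) (MvPolynomial T ℂ) :=
    Matrix.of fun i j => ∑ u, MvPolynomial.X u * MvPolynomial.C (C u i j)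
  let p : T → MvPolynomial T ℂ := fun t => (X.submatrix t.2.1.1 t.2.2.1).det
  have hev : ∀ (x : T → ℂ) (t : T), MvPolynomial.eval x (p t) =
      ((∑ u, x u • C u).submatrix t.2.1.1 t.2.2.1).det := by
    intro x t
    simp only [p]
    rw [RingHom.map_det]
    congr 1
    ext i j
    simp [X, Matrix.sum_apply]
  have hp : ∀ t, p t ≠ 0 := by
    intro t h
    have h2 := hev (Pi.single t 1) t
    have h3 : ∑ u, (Pi.single t 1 : T → ℂ) u • C u = C t := by
      rw [Finset.sum_eq_single t]
      · simp
      · intro b _ hb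
        simp [Pi.single_eq_of_ne hb]
      · simp
    rw [h, h3, hC1] at h2
    simp at h2
  have hprod : (∏ t, p t) ≠ 0 := Finset.prod_ne_zero_iff.mpr fun t _ => hp t
  obtain ⟨x, hx⟩ : ∃ x, MvPolynomial.eval x (∏ t, p t) ≠ 0 := by
    by_contra! h
    exact hprod (MvPolynomial.funext fun x => by simpa using h x)
  rw [map_prod, Finset.prod_ne_zero_iff] at hx
  refine ⟨∑ u, x u • C u, ?_, ?_⟩
  · intro s f g hf hg
    have hs : s ≤ n := by simpa using Fintype.card_le_of_injective f hf.injective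
    have := hx ⟨⟨s, by omega⟩, ⟨f, hf⟩, ⟨g, hg⟩⟩ (Finset.mem_univ _)
    rw [hev] at this
    exact this
  · rw [Matrix.mul_sum]
    exact Finset.sum_eq_zero fun u _ => by rw [Matrix.mul_smul, hC0, smul_zero]
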